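/- arXiv:1812.01332 — 3 statements merged into one kernel-verified Lean document; each statement's English description precedes it below -/
import Mathlib

section
/- Let n ≥ 1, let a : Fin n → ℝ, and let ε > 0. Then S(a, ε) contains a point lying in the topological interior of the convex hull of S(a, ε) if and only if there exist indices i, j with a i < a j < a i + ε. (This is the correctness of the reduction in Lemma 1 of the paper.) -/
/-!
All points lie on or above the parabola `y = x²`, and each `L_k` is on it, so the tangent there
supports the hull. Each `T_k` is on the parabola `y = x² + ε²/4`, whose tangent at `T_k` is the
chord of `y = x²` between the abscissas `a k` and `a k + ε`. That line supports the hull unless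
some `L_j` is strictly below it, i.e. `a j` is strictly between `a k` and `a k + ε`; in that case
`T_k` is a strictly positive convex combination of `L_k`, `L_j` and `T_j`, hence interior to their
triangle.
-/

open Module Set

section ConvexHull

theorem notMem_interior_convexHull_of_forall_le {E : Type*} [AddCommGroup E] [Module ℝ E]
    [TopologicalSpace E] [ContinuousAdd E] [ContinuousSMul ℝ E] {f : StrongDual ℝ E} (hf : f ≠ 0)
    {s : Set E} {p : E} (hp : ∀ q ∈ s, f p ≤ f q) : p ∉ interior (convexHull ℝ s) := by
  intro hint
  have hull_subset : convexHull ℝ s ⊆ f ⁻¹' Ici (f p) :=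
    convexHull_min hp ((convex_Ici (f p)).linear_preimage f.toLinearMap)
  have hlt : f p ∈ interior (Ici (f p)) :=
    (f.isOpenMap_of_ne_zero hf).mapsTo_interior hull_subset hint
  simp at hlt

theorem sum_smul_mem_interior_convexHull {E ι : Type*} [NormedAddCommGroup E] [NormedSpace ℝ E]
    [FiniteDimensional ℝ E] [Fintype ι] {v : ι → E} (hv : AffineIndependent ℝ v)
    (hcard : Fintype.card ι = finrank ℝ E + 1) {w : ι → ℝ} (hpos : ∀ i, 0 < w i)
    (hsum : ∑ i, w i = 1) : ∑ i, w i • v i ∈ interior (convexHull ℝ (range v)) := by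
  let b : AffineBasis ι ℝ E :=
    ⟨v, hv, hv.affineSpan_eq_top_iff_card_eq_finrank_add_one.mpr hcard⟩
  have hcoord (i : ι) : b.coord i (∑ j, w j • v j) = w i := by
    rw [← Finset.univ.affineCombination_eq_linear_combination v w hsum]
    exact b.coord_apply_combination_of_mem (Finset.mem_univ i) hsum
  change _ ∈ interior (convexHull ℝ (range b))
  rw [b.interior_convexHull]
  exact fun i => (hpos i).trans_eq (hcoord i).symm

theorem affineIndependent_of_cross_ne_zero {R : Type*} [CommRing R] [NoZeroDivisors R]
    {A B C : R × R} (h : (B.1 - A.1) * (C.2 - A.2) - (B.2 - A.2) * (C.1 - A.1) ≠ 0) :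
    AffineIndependent R ![A, B, C] := by
  rw [affineIndependent_iff_of_fintype]
  intro w hw hzero
  rw [Finset.univ.weightedVSub_eq_linear_combination hw] at hzero
  simp only [Fin.sum_univ_three] at hw
  simp only [Fin.sum_univ_three, Prod.ext_iff, Matrix.cons_val, Prod.fst_add, Prod.snd_add,
    Prod.smul_fst, Prod.smul_snd, smul_eq_mul, Prod.fst_zero, Prod.snd_zero] at hzero
  obtain ⟨hx, hy⟩ := hzero
  -- Cramer's rule for `w 1 • (B - A) + w 2 • (C - A) = 0`.
  have h₁ : w 1 = 0 := (mul_eq_zero_iff_right h).mp <| by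
    linear_combination (C.2 - A.2) * hx - (C.1 - A.1) * hy + (A.2 * C.1 - A.1 * C.2) * hw
  have h₂ : w 2 = 0 := (mul_eq_zero_iff_right h).mp <| by
    linear_combination (B.1 - A.1) * hy - (B.2 - A.2) * hx + (A.1 * B.2 - A.2 * B.1) * hw
  have h₀ : w 0 = 0 := by simpa [h₁, h₂] using hw
  exact Fin.forall_fin_succ.mpr ⟨h₀, Fin.forall_fin_two.mpr ⟨h₁, h₂⟩⟩

end ConvexHull

/-- The lift of `x` to the parabola `y = x²`; the point `L_k` is `lowerPoint (a k)`. -/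
def lowerPoint (x : ℝ) : ℝ × ℝ := (x, x ^ 2)

/-- The lift of `x + ε / 2` to the parabola `y = x² + ε² / 4`; the point `T_k` is
`upperPoint ε (a k)`. -/
noncomputable def upperPoint (ε x : ℝ) : ℝ × ℝ := (x + ε / 2, (x + ε / 2) ^ 2 + ε ^ 2 / 4)

/-- The set `S(a, ε)` of all the points `L_k` and `T_k`, for a family `a` over any index type. -/
def liftedPoints {ι : Type*} (a : ι → ℝ) (ε : ℝ) : Set (ℝ × ℝ) :=
  {q | ∃ k, q = lowerPoint (a k)} ∪ {q | ∃ k, q = upperPoint ε (a k)}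

/-- The functional `(x, y) ↦ y - m x`, whose level sets are the lines of slope `m`; a larger value
means a higher line. -/
def interceptForm (m : ℝ) : StrongDual ℝ (ℝ × ℝ) :=
  ContinuousLinearMap.snd ℝ ℝ ℝ - m • ContinuousLinearMap.fst ℝ ℝ ℝ

theorem interceptForm_apply (m : ℝ) (q : ℝ × ℝ) : interceptForm m q = q.2 - m * q.1 := rfl

theorem interceptForm_ne_zero (m : ℝ) : interceptForm m ≠ 0 := fun h => by
  simpa [interceptForm_apply] using DFunLike.congr_fun h (0, 1)

section Family

variable {ι : Type*} (a : ι → ℝ) (ε : ℝ)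

theorem lowerPoint_mem_liftedPoints (k : ι) : lowerPoint (a k) ∈ liftedPoints a ε :=
  Or.inl ⟨k, rfl⟩

theorem upperPoint_mem_liftedPoints (k : ι) : upperPoint ε (a k) ∈ liftedPoints a ε :=
  Or.inr ⟨k, rfl⟩

theorem lowerPoint_notMem_interior_convexHull (k : ι) :
    lowerPoint (a k) ∉ interior (convexHull ℝ (liftedPoints a ε)) := by
  refine notMem_interior_convexHull_of_forall_le (interceptForm_ne_zero (2 * a k)) ?_
  rintro _ (⟨j, rfl⟩ | ⟨j, rfl⟩) <;> rw [← sub_nonneg]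
  · calc 0 ≤ (a j - a k) ^ 2 := sq_nonneg _
      _ = _ := by simp only [interceptForm_apply, lowerPoint]; ring
  · calc 0 ≤ (a j + ε / 2 - a k) ^ 2 + (ε / 2) ^ 2 := by positivity
      _ = _ := by simp only [interceptForm_apply, lowerPoint, upperPoint]; ring

variable {a ε}

theorem upperPoint_notMem_interior_convexHull {k : ι}
    (h : ∀ j, 0 ≤ (a j - a k) * (a j - (a k + ε))) :
    upperPoint ε (a k) ∉ interior (convexHull ℝ (liftedPoints a ε)) := by
  refine notMem_interior_convexHull_of_forall_le (interceptForm_ne_zero (2 * a k + ε)) ?_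
  rintro _ (⟨j, rfl⟩ | ⟨j, rfl⟩) <;> rw [← sub_nonneg]
  · calc 0 ≤ (a j - a k) * (a j - (a k + ε)) := h j
      _ = _ := by simp only [interceptForm_apply, lowerPoint, upperPoint]; ring
  · calc 0 ≤ (a j - a k) ^ 2 := sq_nonneg _
      _ = _ := by simp only [interceptForm_apply, upperPoint]; ring

end Family

section Triangle

variable {x y ε : ℝ}

theorem affineIndependent_lowerPoint_lowerPoint_upperPoint (hxy : x ≠ y) (hε : ε ≠ 0)
    (h : y - x + ε ≠ 0) : AffineIndependent ℝ ![lowerPoint x, lowerPoint y, upperPoint ε y] := by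
  apply affineIndependent_of_cross_ne_zero
  have hcross : (y - x) * (ε / 2) * (y - x + ε) ≠ 0 :=
    mul_ne_zero (mul_ne_zero (sub_ne_zero.mpr hxy.symm) (div_ne_zero hε two_ne_zero)) h
  convert hcross using 1
  simp only [lowerPoint, upperPoint]
  ring

theorem upperPoint_eq_combination (h : y - x + ε ≠ 0) :
    upperPoint ε x = ((y - x) / (y - x + ε)) • lowerPoint x
      + ((y - x) / (y - x + ε)) • lowerPoint y
      + ((x + ε - y) / (y - x + ε)) • upperPoint ε y := by
  ext
  · simp only [lowerPoint, upperPoint, Prod.fst_add, Prod.smul_fst, smul_eq_mul]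
    field_simp
    ring
  · simp only [lowerPoint, upperPoint, Prod.snd_add, Prod.smul_snd, smul_eq_mul]
    field_simp
    ring

theorem upperPoint_mem_interior_convexHull_triangle (hxy : x < y) (hyx : y < x + ε) :
    upperPoint ε x ∈
      interior (convexHull ℝ (range ![lowerPoint x, lowerPoint y, upperPoint ε y])) := by
  have hε : 0 < ε := by linarith
  have hd : 0 < y - x := sub_pos.mpr hxy
  have he : 0 < x + ε - y := sub_pos.mpr hyx
  have hden : 0 < y - x + ε := add_pos hd hε
  let w : Fin 3 → ℝ :=
    ![(y - x) / (y - x + ε), (y - x) / (y - x + ε), (x + ε - y) / (y - x + ε)]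
  have hpos : ∀ i, 0 < w i := Fin.forall_fin_succ.mpr
    ⟨div_pos hd hden, Fin.forall_fin_two.mpr ⟨div_pos hd hden, div_pos he hden⟩⟩
  have hsum : ∑ i, w i = 1 := by
    simp only [w, Fin.sum_univ_three, Matrix.cons_val]
    field_simp
    ring
  have hmem := sum_smul_mem_interior_convexHull
    (affineIndependent_lowerPoint_lowerPoint_upperPoint hxy.ne hε.ne' hden.ne') (by simp) hpos hsum
  simpa only [Fin.sum_univ_three, w, Matrix.cons_val, ← upperPoint_eq_combination hden.ne']
    using hmem

end Triangle

theorem upperPoint_mem_interior_convexHull_iff {ι : Type*} {a : ι → ℝ} {ε : ℝ} (hε : 0 ≤ ε)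
    (k : ι) :
    upperPoint ε (a k) ∈ interior (convexHull ℝ (liftedPoints a ε)) ↔
      ∃ j, a k < a j ∧ a j < a k + ε := by
  constructor
  · contrapose!
    intro hgap
    refine upperPoint_notMem_interior_convexHull fun j => ?_
    rcases le_or_gt (a j) (a k) with hjk | hkj
    · exact mul_nonneg_of_nonpos_of_nonpos (by linarith) (by linarith)
    · exact mul_nonneg (sub_nonneg.mpr hkj.le) (sub_nonneg.mpr (hgap j hkj))
  · rintro ⟨j, hkj, hjk⟩
    refine interior_mono (convexHull_mono ?_) (upperPoint_mem_interior_convexHull_triangle hkj hjk)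
    rw [range_subset_iff, Fin.forall_fin_succ, Fin.forall_fin_two]
    exact ⟨lowerPoint_mem_liftedPoints a ε k, lowerPoint_mem_liftedPoints a ε j,
      upperPoint_mem_liftedPoints a ε j⟩

theorem reduction_correctness_general {ι : Type*} (a : ι → ℝ) {ε : ℝ} (hε : 0 ≤ ε) :
    (∃ p ∈ liftedPoints a ε, p ∈ interior (convexHull ℝ (liftedPoints a ε))) ↔
      ∃ i j, a i < a j ∧ a j < a i + ε := by
  constructor
  · rintro ⟨_, ⟨k, rfl⟩ | ⟨k, rfl⟩, hint⟩
    · exact absurd hint (lowerPoint_notMem_interior_convexHull a ε k)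
    · exact ⟨k, (upperPoint_mem_interior_convexHull_iff hε k).mp hint⟩
  · rintro ⟨i, hi⟩
    exact ⟨_, upperPoint_mem_liftedPoints a ε i,
      (upperPoint_mem_interior_convexHull_iff hε i).mpr hi⟩

theorem reduction_correctness (n : ℕ) (hn : 1 ≤ n) (a : Fin n → ℝ) (ε : ℝ)
    (hε : 0 < ε) :
    (∃ p ∈ ({q : ℝ × ℝ | ∃ k : Fin n, q = (a k, (a k)^2)} ∪
            {q : ℝ × ℝ | ∃ k : Fin n, q = (a k + ε/2, (a k + ε/2)^2 + ε^2/4)}),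
      p ∈ interior (convexHull ℝ
        ({q : ℝ × ℝ | ∃ k : Fin n, q = (a k, (a k)^2)} ∪
         {q : ℝ × ℝ | ∃ k : Fin n, q = (a k + ε/2, (a k + ε/2)^2 + ε^2/4)}))) ↔
    (∃ i j : Fin n, a i < a j ∧ a j < a i + ε) :=
  reduction_correctness_general a hε.le
end

section
/- Let n ≥ 1, let a : Fin n → ℝ, and let ε > 0. Then every point of S(a, ε) is an extreme point of the convex hull of S(a, ε) (i.e., S(a, ε) is in convex position) if and only if there are no indices i, j with a i < a j ≤ a i + ε. -/
/-!
`T_k` is the midpoint of the chord of the parabola `y = x ^ 2` over `[a k, a k + ε]`. Measure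
heights above the line through that chord: with `d = a j - a k`, the point `L_j` has height
`d * (d - ε)` and `T_j` has height `d ^ 2`. If no `a j` lies in `(a k, a k + ε]`, then all points
have positive height except `L_k` and `T_k`, which lie on the line, with `T_k` to the right; so
`T_k` is extreme. If `0 < d ≤ ε`, the segment from `L_j` to `T_j` meets the line to the right of
`T_k`, so `T_k` lies strictly between `L_k` and that intersection. The points `L_k` are always
extreme, because all other points lie strictly above the tangent to the parabola at `L_k`.
-/

open Set

section OrderedModule

variable {𝕜 E F G : Type*} [Semiring 𝕜] [PartialOrder 𝕜]
  [AddCommMonoid F] [PartialOrder F] [Module 𝕜 F] [PosSMulStrictMono 𝕜 F]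
  [AddCommMonoid G] [PartialOrder G] [Module 𝕜 G] [PosSMulStrictMono 𝕜 G]

instance posSMulStrictMono_prodLex : PosSMulStrictMono 𝕜 (F ×ₗ G) where
  smul_lt_smul_of_pos_left c hc u v huv := by
    rw [Prod.Lex.lt_iff] at huv ⊢
    rcases huv with h | ⟨h_eq, h⟩
    · exact Or.inl (smul_lt_smul_of_pos_left h hc)
    · exact Or.inr ⟨congrArg (c • ·) h_eq, smul_lt_smul_of_pos_left h hc⟩

variable [IsOrderedCancelAddMonoid F] [AddCommMonoid E] [Module 𝕜 E] {s : Set E} {p x y z : E}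

theorem lt_map_of_mem_openSegment (f : E →ₗ[𝕜] F) {c : F} (hx : c < f x) (hy : c ≤ f y)
    (hz : z ∈ openSegment 𝕜 x y) : c < f z := by
  obtain ⟨α, β, hα, hβ, hαβ, rfl⟩ := hz
  calc
    c = α • c + β • c := (Convex.combo_self hαβ c).symm
    _ < α • f x + β • f y :=
      add_lt_add_of_lt_of_le (smul_lt_smul_of_pos_left hx hα) (smul_le_smul_of_nonneg_left hy hβ.le)
    _ = f (α • x + β • y) := by simp only [map_add, map_smul]

variable [ZeroLEOneClass 𝕜]

theorem convex_insert_setOf_map_lt (f : E →ₗ[𝕜] F) (p : E) :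
    Convex 𝕜 (insert p {q | f p < f q}) := by
  rw [convex_iff_openSegment_subset]
  rintro x (rfl | hx) y (rfl | hy) z hz
  · exact Or.inl ((segment_same 𝕜 y).subset (openSegment_subset_segment 𝕜 y y hz))
  · exact Or.inr (lt_map_of_mem_openSegment f hy le_rfl (openSegment_symm 𝕜 _ y ▸ hz))
  · exact Or.inr (lt_map_of_mem_openSegment f hx le_rfl hz)
  · exact Or.inr (lt_map_of_mem_openSegment f hx hy.le hz)

theorem mem_extremePoints_convexHull_of_forall_map_lt (f : E →ₗ[𝕜] F)
    (hp : p ∈ s) (hf : ∀ q ∈ s, q ≠ p → f p < f q) :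
    p ∈ (convexHull 𝕜 s).extremePoints 𝕜 := by
  have hull_subset : convexHull 𝕜 s ⊆ insert p {q | f p < f q} :=
    convexHull_min (fun q hq => or_iff_not_imp_left.2 (hf q hq)) (convex_insert_setOf_map_lt f p)
  refine mem_extremePoints_iff_left.2 ⟨subset_convexHull 𝕜 s hp, fun x hx y hy hpxy => ?_⟩
  refine (hull_subset hx).resolve_right fun hpx => ?_
  have hpy : f p ≤ f y := (hull_subset hy).elim (fun h => h ▸ le_rfl) le_of_lt
  exact (lt_map_of_mem_openSegment f hpx hpy hpxy).false

theorem mem_extremePoints_convexHull_of_forall_map_lex_lt [IsOrderedCancelAddMonoid G]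
    (f : E →ₗ[𝕜] F) (g : E →ₗ[𝕜] G) (hp : p ∈ s)
    (hfg : ∀ q ∈ s, q ≠ p → f p < f q ∨ f p = f q ∧ g p < g q) :
    p ∈ (convexHull 𝕜 s).extremePoints 𝕜 :=
  mem_extremePoints_convexHull_of_forall_map_lt
    ((toLexLinearEquiv 𝕜 (F × G)).toLinearMap ∘ₗ f.prod g) hp
    fun q hq hqp => Prod.Lex.toLex_lt_toLex.2 (hfg q hq hqp)

end OrderedModule

section Parabola

variable {R : Type*} [CommRing R]

/-- The point of the parabola `y = x ^ 2` with abscissa `x`; the paper's `L_k` is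
`parabolaPoint (a k)`. -/
def parabolaPoint (x : R) : R × R := (x, x ^ 2)

/-- The ordinate at which the line of slope `m` through a given point meets the `y`-axis. Comparing
its values at two points compares their heights above any line of slope `m`. -/
def yIntercept (m : R) : R × R →ₗ[R] R := LinearMap.snd R R R - m • LinearMap.fst R R R

theorem yIntercept_parabolaPoint (u v x : R) :
    yIntercept (u + v) (parabolaPoint x) = (x - u) * (x - v) - u * v := by
  simp only [yIntercept, parabolaPoint, LinearMap.sub_apply, LinearMap.smul_apply,
    LinearMap.snd_apply, LinearMap.fst_apply, smul_eq_mul]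
  ring

theorem yIntercept_tangent_lt_parabolaPoint [LinearOrder R] [IsStrictOrderedRing R] {x y : R}
    (hyx : y ≠ x) :
    yIntercept (x + x) (parabolaPoint x) < yIntercept (x + x) (parabolaPoint y) := by
  rw [yIntercept_parabolaPoint, yIntercept_parabolaPoint]
  linarith [mul_self_pos.2 (sub_ne_zero.2 hyx)]

end Parabola

section ChordConfiguration

variable {𝕜 : Type*} [Field 𝕜]

/-- The midpoint of the chord of the parabola `y = x ^ 2` over `[x, x + ε]`, in the coordinates used
by the paper; its `T_k` is `chordMidpoint ε (a k)`. -/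
def chordMidpoint (ε x : 𝕜) : 𝕜 × 𝕜 := (x + ε / 2, (x + ε / 2) ^ 2 + ε ^ 2 / 4)

/-- The paper's point set `S(a, ε)`, for a family `a` over an arbitrary index type. -/
def chordConfiguration {ι : Sort*} (a : ι → 𝕜) (ε : 𝕜) : Set (𝕜 × 𝕜) :=
  {q | ∃ k, q = parabolaPoint (a k)} ∪ {q | ∃ k, q = chordMidpoint ε (a k)}

theorem yIntercept_chordMidpoint [CharZero 𝕜] (u v ε x : 𝕜) :
    yIntercept (u + v) (chordMidpoint ε x) =
      ((x - u) * (x - v) + (x + ε - u) * (x + ε - v)) / 2 - u * v := by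
  simp only [yIntercept, chordMidpoint, LinearMap.sub_apply, LinearMap.smul_apply,
    LinearMap.snd_apply, LinearMap.fst_apply, smul_eq_mul]
  ring

theorem yIntercept_chordMidpoint_eq_parabolaPoint [CharZero 𝕜] (ε x : 𝕜) :
    yIntercept (x + (x + ε)) (chordMidpoint ε x) =
      yIntercept (x + (x + ε)) (parabolaPoint x) := by
  rw [yIntercept_chordMidpoint, yIntercept_parabolaPoint]
  ring

variable [LinearOrder 𝕜] [IsStrictOrderedRing 𝕜] {ε x y : 𝕜}

theorem yIntercept_tangent_lt_chordMidpoint (hε : ε ≠ 0) (x y : 𝕜) :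
    yIntercept (x + x) (parabolaPoint x) < yIntercept (x + x) (chordMidpoint ε y) := by
  rw [yIntercept_parabolaPoint, yIntercept_chordMidpoint]
  nlinarith [sq_nonneg (2 * (y - x) + ε), sq_pos_of_ne_zero hε]

theorem yIntercept_chord_lt_parabolaPoint (hε : 0 ≤ ε) (hy : y < x ∨ x + ε < y) :
    yIntercept (x + (x + ε)) (chordMidpoint ε x) < yIntercept (x + (x + ε)) (parabolaPoint y) := by
  rw [yIntercept_chordMidpoint, yIntercept_parabolaPoint]
  have outside : 0 < (y - x) * (y - (x + ε)) := by
    rcases hy with hy | hy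
    · exact mul_pos_of_neg_of_neg (by linarith) (by linarith)
    · exact mul_pos (by linarith) (by linarith)
  linarith

theorem yIntercept_chord_lt_chordMidpoint (hyx : y ≠ x) :
    yIntercept (x + (x + ε)) (chordMidpoint ε x) <
      yIntercept (x + (x + ε)) (chordMidpoint ε y) := by
  rw [yIntercept_chordMidpoint, yIntercept_chordMidpoint]
  linarith [mul_self_pos.2 (sub_ne_zero.2 hyx)]

/- With `d = y - x`, the heights of the two endpoints above the line through the chord over
`[x, x + ε]` are `d ^ 2` and `d * (d - ε)`, so the segment meets that line at parameter `d / ε`. -/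
theorem chordMidpoint_mem_openSegment (hxy : x < y) (hyx : y ≤ x + ε) :
    chordMidpoint ε x ∈ openSegment 𝕜 (parabolaPoint x)
      (AffineMap.lineMap (chordMidpoint ε y) (parabolaPoint y) ((y - x) / ε)) := by
  obtain ⟨d, rfl⟩ : ∃ d, y = x + d := ⟨y - x, by ring⟩
  have hd : 0 < d := by linarith
  have hε : 0 < ε := by linarith
  refine ⟨d / (ε + d), ε / (ε + d), by positivity, by positivity, by field_simp; ring, ?_⟩
  simp only [chordMidpoint, parabolaPoint, AffineMap.lineMap_apply_module, Prod.smul_mk,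
    Prod.mk_add_mk, smul_eq_mul, Prod.mk.injEq]
  constructor <;> field_simp <;> ring

theorem chordMidpoint_notMem_extremePoints {C : Set (𝕜 × 𝕜)} (hC : Convex 𝕜 C)
    (hxy : x < y) (hyx : y ≤ x + ε) (hLx : parabolaPoint x ∈ C) (hLy : parabolaPoint y ∈ C)
    (hTy : chordMidpoint ε y ∈ C) : chordMidpoint ε x ∉ C.extremePoints 𝕜 := by
  intro hTx
  have hε : 0 < ε := by linarith
  have weight_mem : (y - x) / ε ∈ Icc 0 1 :=
    ⟨div_nonneg (by linarith) hε.le, (div_le_one hε).2 (by linarith)⟩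
  have h_eq : parabolaPoint x = chordMidpoint ε x :=
    hTx.2 hLx (hC.lineMap_mem hTy hLy weight_mem) (chordMidpoint_mem_openSegment hxy hyx)
  have : x = x + ε / 2 := congrArg Prod.fst h_eq
  linarith

variable {ι : Sort*} {a : ι → 𝕜}

theorem parabolaPoint_mem_extremePoints (hε : ε ≠ 0) (k : ι) :
    parabolaPoint (a k) ∈ (convexHull 𝕜 (chordConfiguration a ε)).extremePoints 𝕜 := by
  refine mem_extremePoints_convexHull_of_forall_map_lt (yIntercept (a k + a k))
    (Or.inl ⟨k, rfl⟩) ?_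
  rintro _ (⟨j, rfl⟩ | ⟨j, rfl⟩) hjk
  · exact yIntercept_tangent_lt_parabolaPoint (ne_of_apply_ne parabolaPoint hjk)
  · exact yIntercept_tangent_lt_chordMidpoint hε (a k) (a j)

theorem chordMidpoint_mem_extremePoints (hε : 0 < ε) {k : ι}
    (hk : ∀ j, a k < a j → a k + ε < a j) :
    chordMidpoint ε (a k) ∈ (convexHull 𝕜 (chordConfiguration a ε)).extremePoints 𝕜 := by
  -- `L_k` also lies on the supporting line, so ties are broken by preferring larger abscissas.
  refine mem_extremePoints_convexHull_of_forall_map_lex_lt (yIntercept (a k + (a k + ε)))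
    (-LinearMap.fst 𝕜 𝕜 𝕜) (Or.inr ⟨k, rfl⟩) ?_
  rintro _ (⟨j, rfl⟩ | ⟨j, rfl⟩) hjk
  · rcases lt_trichotomy (a j) (a k) with hlt | heq | hgt
    · exact Or.inl (yIntercept_chord_lt_parabolaPoint hε.le (Or.inl hlt))
    · rw [heq]
      exact Or.inr ⟨yIntercept_chordMidpoint_eq_parabolaPoint ε (a k),
        neg_lt_neg (lt_add_of_pos_right _ (half_pos hε))⟩
    · exact Or.inl (yIntercept_chord_lt_parabolaPoint hε.le (Or.inr (hk j hgt)))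
  · exact Or.inl (yIntercept_chord_lt_chordMidpoint (ne_of_apply_ne (chordMidpoint ε) hjk))

theorem convex_position_iff_general (a : ι → 𝕜) (hε : 0 < ε) :
    chordConfiguration a ε ⊆ (convexHull 𝕜 (chordConfiguration a ε)).extremePoints 𝕜 ↔
      ¬∃ i j, a i < a j ∧ a j ≤ a i + ε := by
  constructor
  · rintro h ⟨i, j, hij, hji⟩
    have subset_hull := subset_convexHull 𝕜 (chordConfiguration a ε)
    exact chordMidpoint_notMem_extremePoints (convex_convexHull 𝕜 _) hij hji
      (subset_hull (Or.inl ⟨i, rfl⟩)) (subset_hull (Or.inl ⟨j, rfl⟩))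
      (subset_hull (Or.inr ⟨j, rfl⟩)) (h (Or.inr ⟨i, rfl⟩))
  · rintro h _ (⟨k, rfl⟩ | ⟨k, rfl⟩)
    · exact parabolaPoint_mem_extremePoints hε.ne' k
    · exact chordMidpoint_mem_extremePoints hε fun j hkj => not_le.1 fun hjk => h ⟨k, j, hkj, hjk⟩

end ChordConfiguration

theorem convex_position_iff (n : ℕ) (hn : 1 ≤ n) (a : Fin n → ℝ) (ε : ℝ)
    (hε : 0 < ε) :
    (({q : ℝ × ℝ | ∃ k : Fin n, q = (a k, (a k)^2)} ∪
      {q : ℝ × ℝ | ∃ k : Fin n, q = (a k + ε/2, (a k + ε/2)^2 + ε^2/4)}) ⊆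
     Set.extremePoints ℝ (convexHull ℝ
       ({q : ℝ × ℝ | ∃ k : Fin n, q = (a k, (a k)^2)} ∪
        {q : ℝ × ℝ | ∃ k : Fin n, q = (a k + ε/2, (a k + ε/2)^2 + ε^2/4)}))) ↔
    ¬∃ i j : Fin n, a i < a j ∧ a j ≤ a i + ε :=
  convex_position_iff_general a hε
end

section
/- Let n ≥ 1, let a : Fin n → ℝ, let ε > 0, and fix an index i. If a point p of S(a, ε) lies strictly below the line ℓ_i through L_i with slope 2·(a i) + ε (i.e., writing p = (x, y), y < (a i)² + (2·(a i) + ε)(x − a i)), then there exists an index j with p = L_j and a i < a j < a i + ε. -/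
/-!
The line through `(b, b ^ 2)` with slope `2 * b + ε` is the secant of the parabola `y = x ^ 2` over
the abscissae `b` and `b + ε`, so the parabola is below it exactly between these two. Raised by
`ε ^ 2 / 4`, the largest vertical gap between chord and arc, the parabola is tangent to this line
at `x = b + ε / 2`; hence no point of the raised parabola, such as `T_k`, is below the line.
-/

section CommRing

variable {R : Type*} [CommRing R]

/-- The height at abscissa `x` of the line through `(b, b ^ 2)` with slope `2 * b + ε`; the line
`ℓ_i` is the graph of `parabolaSecant (a i) ε`. -/
def parabolaSecant (b ε x : R) : R := b ^ 2 + (2 * b + ε) * (x - b)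

theorem sq_sub_parabolaSecant (b ε x : R) :
    x ^ 2 - parabolaSecant b ε x = (x - b) * (x - (b + ε)) := by
  unfold parabolaSecant
  ring

theorem sq_lt_parabolaSecant_iff [LinearOrder R] [IsStrictOrderedRing R] {b ε x : R}
    (hε : 0 ≤ ε) : x ^ 2 < parabolaSecant b ε x ↔ b < x ∧ x < b + ε := by
  rw [← sub_neg, sq_sub_parabolaSecant, mul_neg_iff, sub_pos, sub_neg, sub_neg, sub_pos]
  exact or_iff_left fun ⟨hxb, hbx⟩ ↦ (le_add_of_nonneg_right hε).not_gt (hbx.trans hxb)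

end CommRing

section Field

variable {K : Type*} [Field K]

theorem sq_add_sub_parabolaSecant [NeZero (2 : K)] (b ε x : K) :
    x ^ 2 + ε ^ 2 / 4 - parabolaSecant b ε x = (x - (b + ε / 2)) ^ 2 := by
  have h4 : (4 : K) = 2 * 2 := by norm_num
  rw [parabolaSecant, h4]
  field_simp
  ring

variable [LinearOrder K] [IsStrictOrderedRing K]

theorem parabolaSecant_le_sq_add (b ε x : K) : parabolaSecant b ε x ≤ x ^ 2 + ε ^ 2 / 4 := by
  rw [← sub_nonneg, sq_add_sub_parabolaSecant]
  exact sq_nonneg _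

theorem point_below_line_is_close_L_general {ι : Type*} {a : ι → K} {ε : K} (hε : 0 ≤ ε) {i : ι}
    {p : K × K}
    (hp : p ∈ {q : K × K | ∃ k, q = (a k, a k ^ 2)} ∪
      {q : K × K | ∃ k, q = (a k + ε / 2, (a k + ε / 2) ^ 2 + ε ^ 2 / 4)})
    (hbelow : p.2 < parabolaSecant (a i) ε p.1) :
    ∃ j, p = (a j, a j ^ 2) ∧ a i < a j ∧ a j < a i + ε := by
  rcases hp with ⟨k, rfl⟩ | ⟨k, rfl⟩
  · exact ⟨k, rfl, (sq_lt_parabolaSecant_iff hε).mp hbelow⟩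
  · exact absurd hbelow (parabolaSecant_le_sq_add ..).not_gt

end Field

theorem point_below_line_is_close_L (n : ℕ) (hn : 1 ≤ n) (a : Fin n → ℝ) (ε : ℝ)
    (hε : 0 < ε) (i : Fin n) (p : ℝ × ℝ)
    (hp : p ∈ ({q : ℝ × ℝ | ∃ k : Fin n, q = (a k, (a k)^2)} ∪
               {q : ℝ × ℝ | ∃ k : Fin n, q = (a k + ε/2, (a k + ε/2)^2 + ε^2/4)}))
    (hbelow : p.2 < (a i)^2 + (2 * a i + ε) * (p.1 - a i)) :
    ∃ j : Fin n, p = (a j, (a j)^2) ∧ a i < a j ∧ a j < a i + ε :=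
  point_below_line_is_close_L_general hε.le hp hbelow
end
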